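/- Let (X,T) be a general topological dynamical system with T surjective, and let (X_T, S) be its natural extension. Then (X_T, S) is lowerable (respectively hereditarily lowerable, respectively HUL, respectively asymptotically h-expansive) if and only if (X,T) is lowerable (respectively hereditarily lowerable, respectively HUL, respectively asymptotically h-expansive). -/

import Mathlib

open Filter Set Metric MeasureTheory
open scoped ENNReal Topology

noncomputable section

variable {X Y : Type*}

def IsSep [PseudoMetricSpace X] (T : X → X) (n : ℕ) (ε : ℝ) (E : Set X) : Prop :=
  E.Pairwise fun x y => ∃ i < n, ε < dist (T^[i] x) (T^[i] y)

def sepMaxCard [PseudoMetricSpace X] (T : X → X) (n : ℕ) (ε : ℝ) (K : Set X) : ℝ≥0∞ :=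
  ⨆ (E : Finset X) (_ : ↑E ⊆ K ∧ IsSep T n ε (↑E : Set X)), (E.card : ℝ≥0∞)

def sepEnt [PseudoMetricSpace X] (T : X → X) (ε : ℝ) (K : Set X) : EReal :=
  Filter.atTop.limsup fun n : ℕ => ENNReal.log (sepMaxCard T n ε K) / (n : EReal)

def subEnt [PseudoMetricSpace X] (T : X → X) (K : Set X) : EReal :=
  ⨆ (ε : ℝ) (_ : 0 < ε), sepEnt T ε K

/-- `(X,T)` is lowerable. -/
def Lowerable [PseudoMetricSpace X] (T : X → X) : Prop :=
  ∀ h : EReal, 0 ≤ h → h ≤ subEnt T (univ : Set X) →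
    ∃ K : Set X, K.Nonempty ∧ IsCompact K ∧ subEnt T K = h

/-- `(X,T)` is hereditarily lowerable. -/
def HerLowerable [PseudoMetricSpace X] (T : X → X) : Prop :=
  ∀ K : Set X, K.Nonempty → IsCompact K → ∀ h : EReal, 0 ≤ h → h ≤ subEnt T K →
    ∃ K' : Set X, K' ⊆ K ∧ K'.Nonempty ∧ IsCompact K' ∧ subEnt T K' = h

/-- `(X,T)` is hereditarily uniformly lowerable: the lowering subset can moreover be chosen
with at most one limit (accumulation) point. -/
def HUL [PseudoMetricSpace X] (T : X → X) : Prop :=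
  ∀ K : Set X, K.Nonempty → IsCompact K → ∀ h : EReal, 0 ≤ h → h ≤ subEnt T K →
    ∃ K' : Set X, K' ⊆ K ∧ K'.Nonempty ∧ IsCompact K' ∧ subEnt T K' = h ∧
      {x | AccPt x (𝓟 K')}.Subsingleton

/-- `Φ_ε(x) = {y : d(T^n x, T^n y) ≤ ε for all n ≥ 0}`. -/
def Phi [PseudoMetricSpace X] (T : X → X) (ε : ℝ) (x : X) : Set X :=
  {y | ∀ n : ℕ, dist (T^[n] x) (T^[n] y) ≤ ε}

/-- `h*_T(ε) = sup_x h(T, Φ_ε(x))`. -/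
def hStar [PseudoMetricSpace X] (T : X → X) (ε : ℝ) : EReal :=
  ⨆ x : X, subEnt T (Phi T ε x)

/-- `(X,T)` is asymptotically `h`-expansive: `h*_T(ε) → 0` as `ε → 0+`. -/
def AsympHExpansive [PseudoMetricSpace X] (T : X → X) : Prop :=
  Tendsto (fun ε : ℝ => hStar T ε) (𝓝[>] 0) (𝓝 (0 : EReal))

/-- `T^n` for `n : ℤ`, for a homeomorphism `T`. -/
def iterZ [TopologicalSpace X] (T : X ≃ₜ X) : ℤ → X → X
  | Int.ofNat n => (⇑T)^[n]
  | Int.negSucc n => (⇑T.symm)^[n + 1]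

/-- `T` is expansive with expansive constant `δ`. -/
def ExpansiveWith [MetricSpace X] (T : X ≃ₜ X) (δ : ℝ) : Prop :=
  ∀ x y : X, x ≠ y → ∃ n : ℤ, δ < dist (iterZ T n x) (iterZ T n y)

/-- `K ⪰ 𝒲` : `K` is contained in some member of the family `𝒲`. -/
def Refines (K : Set X) (W : Finset (Set X)) : Prop := ∃ A ∈ W, K ⊆ A

/-- The join `U ∨ V` of two finite covers. -/
def covJoin (U V : Finset (Set X)) : Finset (Set X) :=
  letI := Classical.decEq (Set X)
  (U ×ˢ V).image fun p => p.1 ∩ p.2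

/-- `dynCov T U n = U_0^{n-1} = ⋁_{i=0}^{n-1} T^{-i} U` (with `U_0^{-1} = {univ}`). -/
def dynCov (T : X → X) (U : Finset (Set X)) : ℕ → Finset (Set X)
  | 0 => {(univ : Set X)}
  | n + 1 =>
      letI := Classical.decEq (Set X)
      covJoin (dynCov T U n) (U.image fun A => T^[n] ⁻¹' A)

/-- `n_{T,U}(K)`: `0` if `K ⋠ U`; `+∞` if `T^i K ⪰ U` for all `i`; otherwise the largest `j`
with `T^i K ⪰ U` for all `0 ≤ i ≤ j-1`. -/
def nTU (T : X → X) (U : Finset (Set X)) (K : Set X) : ℕ∞ :=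
  ⨆ (j : ℕ) (_ : ∀ i < j, Refines (T^[i] '' K) U), (j : ℕ∞)

/-- `e^{-λ n}` for `n : ℕ∞`, valued in `ℝ≥0∞` (with the conventions `e^{-λ·∞} = 0` for `λ > 0`,
`= 1` for `λ = 0` and `= ∞` for `λ < 0`). -/
def expWeight (lam : ℝ) (n : ℕ∞) : ℝ≥0∞ :=
  if n = ⊤ then (if 0 < lam then 0 else if lam = 0 then 1 else ⊤)
  else ENNReal.ofReal (Real.exp (-(lam * (n.toNat : ℝ))))

/-- `m_{T,U}(K,λ,k)`: the infimum of `∑_{E ∈ 𝓔} e^{-λ n_{T,U}(E)}` over all countable families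
`𝓔` of subsets of `X` with `∪𝓔 ⊇ K` and `E ⪰ U_0^{k-1}` for every `E ∈ 𝓔`. -/
def mTU (T : X → X) (U : Finset (Set X)) (K : Set X) (lam : ℝ) (k : ℕ) : ℝ≥0∞ :=
  ⨅ (ℰ : Set (Set X)) (_ : ℰ.Countable ∧ K ⊆ ⋃₀ ℰ ∧ ∀ E ∈ ℰ, Refines E (dynCov T U k)),
    ∑' E : ℰ, expWeight lam (nTU T U (E : Set X))

/-- `m_{T,U}(K,λ) = lim_{k→∞} m_{T,U}(K,λ,k)`; since `m_{T,U}(K,λ,k)` is nondecreasing in `k`,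
the limit is the supremum. -/
def mTUlim (T : X → X) (U : Finset (Set X)) (K : Set X) (lam : ℝ) : ℝ≥0∞ :=
  ⨆ k : ℕ, mTU T U K lam k

/-- `h^B_U(T,K) = inf {λ : m_{T,U}(K,λ) = 0}`. -/
def hBU (T : X → X) (U : Finset (Set X)) (K : Set X) : EReal :=
  ⨅ (lam : ℝ) (_ : mTUlim T U K lam = 0), (lam : EReal)

/-- The dimensional entropy `h^B(T,K) = sup_U h^B_U(T,K)`, supremum over finite open covers. -/
def hB [TopologicalSpace X] (T : X → X) (K : Set X) : EReal :=
  ⨆ (U : Finset (Set X)) (_ : (∀ A ∈ U, IsOpen A) ∧ ⋃₀ (↑U : Set (Set X)) = univ),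
    hBU T U K

/-- `N(U,K)`: the minimal cardinality of a subfamily of `U` covering `K` (`0` for `K = ∅`,
`∞` if no subfamily covers `K`). -/
def covCard (U : Finset (Set X)) (K : Set X) : ℝ≥0∞ :=
  ⨅ (V : Finset (Set X)) (_ : V ⊆ U ∧ K ⊆ ⋃₀ (↑V : Set (Set X))), (V.card : ℝ≥0∞)

/-- `h_U(T,K) = limsup_{n→∞} (1/n) log N(U_0^{n-1},K)`. -/
def hCov (T : X → X) (U : Finset (Set X)) (K : Set X) : EReal :=
  Filter.atTop.limsup fun n : ℕ => ENNReal.log (covCard (dynCov T U n) K) / (n : EReal)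

/-- Topological entropy of a subset via open covers: `h(T,K) = sup_U h_U(T,K)`. -/
def hCovSup [TopologicalSpace X] (T : X → X) (K : Set X) : EReal :=
  ⨆ (U : Finset (Set X)) (_ : (∀ A ∈ U, IsOpen A) ∧ ⋃₀ (↑U : Set (Set X)) = univ),
    hCov T U K

/-- The atom of the (finite) partition `P` containing `x`. -/
def atomAt (P : Finset (Set X)) (x : X) : Set X := ⋃₀ {A | A ∈ P ∧ x ∈ A}

/-- `P` is a finite Borel partition. -/
def IsFinPartition [MeasurableSpace X] (P : Finset (Set X)) : Prop :=
  (∀ A ∈ P, MeasurableSet A) ∧ ⋃₀ (↑P : Set (Set X)) = univ ∧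
    (↑P : Set (Set X)).Pairwise fun A B => Disjoint A B

/-- The Shannon entropy `H_μ(P) = ∑_{A ∈ P} -μ(A) log μ(A)` of a finite partition. -/
def partEnt [MeasurableSpace X] (μ : Measure X) (P : Finset (Set X)) : ℝ :=
  ∑ A ∈ P, -((μ A).toReal * Real.log (μ A).toReal)

/-- The measure-theoretic (Kolmogorov–Sinai) entropy `h_μ(T)`: the supremum over finite Borel
partitions `P` of `lim_n (1/n) H_μ(P_0^{n-1})`; by subadditivity this limit is the infimum. -/
def ksEntropy [MeasurableSpace X] (T : X → X) (μ : Measure X) : EReal :=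
  ⨆ (P : Finset (Set X)) (_ : IsFinPartition P),
    ⨅ n : ℕ, ((partEnt μ (dynCov T P (n + 1)) / (n + 1) : ℝ) : EReal)

/-- `π` is a principal factor map from `(X,T)` to `(Y,S)` : `h_μ(T) = h_{πμ}(S)` for every
`T`-invariant Borel probability measure `μ`. -/
def IsPrincipal [MeasurableSpace X] [MeasurableSpace Y] (T : X → X) (S : Y → Y)
    (π : X → Y) : Prop :=
  ∀ μ : Measure X, IsProbabilityMeasure μ → Measure.map T μ = μ →
    ksEntropy T μ = ksEntropy S (Measure.map π μ)

/-- The relative topological entropy `h_top(T,X|π) = sup_{y ∈ Y} h(T, π^{-1}(y))`. -/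
def relEnt [PseudoMetricSpace X] (T : X → X) (π : X → Y) : EReal :=
  ⨆ y : Y, subEnt T (π ⁻¹' {y})

/-- The canonical conversion `EReal → ℝ≥0∞` (`⊥` and negative reals go to `0`). -/
def erealToENNReal (x : EReal) : ℝ≥0∞ := if x = ⊤ then ⊤ else ENNReal.ofReal x.toReal


attribute [local instance] PiCountable.metricSpace

/-- The natural extension `X_T = {(x₁,x₂,…) : T(x_{i+1}) = x_i}` of a surjective GTDS,
as a subspace of the countable product `ℕ → X` (carrying a metric inducing the product
topology). -/
def NatExt (T : X → X) : Type _ := {x : ℕ → X // ∀ i : ℕ, T (x (i + 1)) = x i}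

instance natExtMetricSpace [MetricSpace X] (T : X → X) : MetricSpace (NatExt T) :=
  inferInstanceAs (MetricSpace {x : ℕ → X // ∀ i : ℕ, T (x (i + 1)) = x i})

/-- The shift homeomorphism `S(x₁,x₂,x₃,…) = (T(x₁),x₁,x₂,…)` on the natural extension. -/
def natExtShift (T : X → X) (x : NatExt T) : NatExt T :=
  ⟨fun n => Nat.casesOn n (T (x.1 0)) x.1, by
    intro i
    cases i with
    | zero => rfl
    | succ k => exact x.2 k⟩

/-!
Every coordinate projection `coord T m` from the natural extension to `X` is a semiconjugacy that
preserves the entropy of every subset: it satisfies `T^[m] ∘ coord T m = coord T 0`, on a compact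
space `K` and `T^[m] '' K` have the same entropy, and the projections generate the uniformity of
the natural extension. Applied to the factor map `coord T 0`, this transfers every property except
the passage of HUL from `X` to its natural extension, since there a subset of `X` with one limit
point lifts to a set `A` whose limit points may spread over a whole fibre of `coord T 0`.

Let `h > 0` be the entropy of `A`, and suppose that no subset of `A` converging to a single point
has entropy `h`. A compactness argument gives a point `z₀` near which the local entropy of `A` comes
arbitrarily close to `h`, although at `z₀` itself it is smaller than some `c < h`. So near `z₀`
there are convergent subsets of `A` with entropy close to `h`, whose entropy at any prescribed scale
is still less than `c`. The limits of these sets lie in one fibre, where two distinct points never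
have all their coordinates in the same finite set; hence suitable coordinate projections carry the
sets to sets in `X` converging to infinitely many points. A union of such sets in `X`, chosen to
shrink towards one further point and to have small entropy at ever finer scales, has entropy at
least `h`. A subset of the union with a single limit point meets all but one of the sets in a finite
set, and so has entropy less than `h`, which contradicts HUL.
-/

open ExpGrowth Function
open scoped Uniformity

theorem expGrowthSup_natCast_add_one : expGrowthSup (fun n : ℕ => (n : ℝ≥0∞) + 1) = 0 := by
  refine le_antisymm (EReal.le_of_forall_lt_iff_le.1 fun r hr => ?_) ?_
  · have hr : 0 < r := EReal.coe_pos.1 hr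
    rw [← expGrowthSup_exp (a := r)]
    refine expGrowthSup_le_of_eventually_le (b := ENNReal.ofReal (1 + r⁻¹)) ENNReal.ofReal_ne_top
      (.of_forall fun n => ?_)
    have hexp : EReal.exp (r * n) = ENNReal.ofReal (Real.exp (r * n)) := by
      rw [← EReal.exp_coe, EReal.coe_mul, EReal.coe_natCast]
    rw [hexp, ← ENNReal.ofReal_mul (by positivity), ← Nat.cast_add_one, ← ENNReal.ofReal_natCast]
    apply ENNReal.ofReal_le_ofReal
    calc ((n + 1 : ℕ) : ℝ) ≤ (1 + r⁻¹) * (r * n + 1) := by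
          have hrn : 0 ≤ r * n + r⁻¹ := by positivity
          push_cast
          linear_combination hrn - n * inv_mul_cancel₀ hr.ne'
      _ ≤ (1 + r⁻¹) * Real.exp (r * n) := by gcongr; exact Real.add_one_le_exp _
  · rw [← expGrowthSup_const one_ne_zero ENNReal.one_ne_top]
    exact expGrowthSup_monotone fun n => le_add_self

section SeparatedSets

variable [PseudoMetricSpace X] [PseudoMetricSpace Y] {T : X → X} {S : Y → Y} {f : X → Y}
  {n m : ℕ} {ε δ : ℝ} {K L : Set X}

theorem IsSep.card_le_sepMaxCard {E : Finset X} (hE : IsSep T n ε (E : Set X)) (hEK : ↑E ⊆ K) :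
    (E.card : ℝ≥0∞) ≤ sepMaxCard T n ε K :=
  le_iSup₂_of_le E ⟨hEK, hE⟩ le_rfl

theorem exists_isSep_of_lt_sepMaxCard {a : ℝ≥0∞} (h : a < sepMaxCard T n ε K) :
    ∃ E : Finset X, ↑E ⊆ K ∧ IsSep T n ε (E : Set X) ∧ a < E.card := by
  obtain ⟨E, ⟨hEK, hE⟩, ha⟩ := by simpa only [sepMaxCard, lt_iSup_iff] using h
  exact ⟨E, hEK, hE, ha⟩

theorem sepMaxCard_mono (h : K ⊆ L) : sepMaxCard T n ε K ≤ sepMaxCard T n ε L :=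
  iSup₂_le fun _ hE => hE.2.card_le_sepMaxCard (hE.1.trans h)

theorem sepMaxCard_anti (h : δ ≤ ε) : sepMaxCard T n ε K ≤ sepMaxCard T n δ K :=
  iSup₂_le fun _ hE => IsSep.card_le_sepMaxCard
    (hE.2.mono' fun _ _ ⟨i, hi, hd⟩ => ⟨i, hi, h.trans_lt hd⟩) hE.1

theorem sepMaxCard_union_le :
    sepMaxCard T n ε (K ∪ L) ≤ sepMaxCard T n ε K + sepMaxCard T n ε L := by
  classical
  refine iSup₂_le fun E ⟨hEKL, hE⟩ => ?_
  rw [← Finset.card_filter_add_card_filter_not (· ∈ K), Nat.cast_add]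
  have hsub (p : X → Prop) [DecidablePred p] : IsSep T n ε (E.filter p : Set X) :=
    Set.Pairwise.mono (Finset.coe_subset.2 (E.filter_subset p)) hE
  gcongr
  · exact (hsub _).card_le_sepMaxCard fun x hx => (Finset.mem_filter.1 hx).2
  · exact (hsub _).card_le_sepMaxCard fun x hx =>
      (hEKL (Finset.mem_filter.1 hx).1).resolve_left (Finset.mem_filter.1 hx).2

theorem sepMaxCard_le_ncard (hK : K.Finite) : sepMaxCard T n ε K ≤ K.ncard := by
  refine iSup₂_le fun E hE => ?_
  rw [← ncard_coe_finset]
  exact_mod_cast ncard_le_ncard hE.1 hK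

theorem sepMaxCard_empty : sepMaxCard T n ε ∅ = 0 := by
  simpa using sepMaxCard_le_ncard (T := T) (n := n) (ε := ε) finite_empty

theorem sepMaxCard_biUnion_le {ι : Type*} (s : Finset ι) (A : ι → Set X) :
    sepMaxCard T n ε (⋃ i ∈ s, A i) ≤ ∑ i ∈ s, sepMaxCard T n ε (A i) := by
  classical
  induction s using Finset.induction_on with
  | empty => simp [sepMaxCard_empty]
  | insert i s hi ih =>
    rw [Finset.set_biUnion_insert, Finset.sum_insert hi]
    exact sepMaxCard_union_le.trans (by gcongr)

theorem one_le_sepMaxCard (hK : K.Nonempty) : 1 ≤ sepMaxCard T n ε K := by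
  obtain ⟨x, hx⟩ := hK
  have hsep : IsSep T n ε (({x} : Finset X) : Set X) := by simp [IsSep]
  simpa using hsep.card_le_sepMaxCard (by simpa using hx)

theorem sepMaxCard_le_one (h : ∀ x ∈ K, ∀ y ∈ K, ∀ i < n, dist (T^[i] x) (T^[i] y) ≤ ε) :
    sepMaxCard T n ε K ≤ 1 := by
  refine iSup₂_le fun E ⟨hEK, hE⟩ => ?_
  rw [Nat.cast_le_one, Finset.card_le_one]
  intro x hx y hy
  by_contra hxy
  obtain ⟨i, hi, hd⟩ := hE hx hy hxy
  exact hd.not_ge (h x (hEK hx) y (hEK hy) i hi)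

theorem sepMaxCard_le_of_mapsTo {L : Set Y} (hδ : 0 ≤ δ) (hf : MapsTo f K L)
    (h : ∀ x ∈ K, ∀ y ∈ K, (∀ i < m, dist (S^[i] (f x)) (S^[i] (f y)) ≤ δ) →
      ∀ i < n, dist (T^[i] x) (T^[i] y) ≤ ε) :
    sepMaxCard T n ε K ≤ sepMaxCard S m δ L := by
  classical
  refine iSup₂_le fun E ⟨hEK, hE⟩ => ?_
  have hsep {x y} (hx : x ∈ E) (hy : y ∈ E) (hxy : x ≠ y) :
      ∃ i < m, δ < dist (S^[i] (f x)) (S^[i] (f y)) := by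
    by_contra! hclose
    obtain ⟨i, hi, hd⟩ := hE hx hy hxy
    exact hd.not_ge (h x (hEK hx) y (hEK hy) hclose i hi)
  have hinj : InjOn f E := fun x hx y hy hxy => by
    by_contra hne
    obtain ⟨i, -, hd⟩ := hsep hx hy hne
    rw [hxy, dist_self] at hd
    exact hd.not_ge hδ
  rw [← Finset.card_image_of_injOn hinj]
  apply IsSep.card_le_sepMaxCard
  · rw [Finset.coe_image]
    rintro _ ⟨x, hx, rfl⟩ _ ⟨y, hy, rfl⟩ hne
    exact hsep hx hy (ne_of_apply_ne f hne)
  · rw [Finset.coe_image]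
    exact (hf.mono_left hEK).image_subset

end SeparatedSets

section Entropy

variable [PseudoMetricSpace X] [PseudoMetricSpace Y] {T : X → X} {S : Y → Y} {f : X → Y}
  {ε δ : ℝ} {K L : Set X}

theorem sepEnt_mono (h : K ⊆ L) : sepEnt T ε K ≤ sepEnt T ε L :=
  expGrowthSup_monotone fun _ => sepMaxCard_mono h

theorem sepEnt_anti (h : δ ≤ ε) : sepEnt T ε K ≤ sepEnt T δ K :=
  expGrowthSup_monotone fun _ => sepMaxCard_anti h

theorem sepEnt_union_le : sepEnt T ε (K ∪ L) ≤ max (sepEnt T ε K) (sepEnt T ε L) :=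
  (expGrowthSup_monotone fun _ => sepMaxCard_union_le).trans_eq expGrowthSup_add

theorem sepEnt_finite_le (hK : K.Finite) : sepEnt T ε K ≤ 0 := by
  rw [← expGrowthSup_const one_ne_zero ENNReal.one_ne_top]
  exact expGrowthSup_le_of_eventually_le (ENNReal.natCast_ne_top K.ncard)
    (.of_forall fun _ => by simpa using sepMaxCard_le_ncard hK)

theorem sepEnt_nonneg (hK : K.Nonempty) : 0 ≤ sepEnt T ε K := by
  rw [← expGrowthSup_const one_ne_zero ENNReal.one_ne_top]
  exact expGrowthSup_monotone fun _ => one_le_sepMaxCard hK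

theorem sepEnt_le_subEnt (hε : 0 < ε) : sepEnt T ε K ≤ subEnt T K :=
  le_iSup₂_of_le ε hε le_rfl

theorem subEnt_mono (h : K ⊆ L) : subEnt T K ≤ subEnt T L :=
  iSup₂_mono fun _ _ => sepEnt_mono h

theorem subEnt_union_le : subEnt T (K ∪ L) ≤ max (subEnt T K) (subEnt T L) :=
  iSup₂_le fun _ hε =>
    sepEnt_union_le.trans (max_le_max (sepEnt_le_subEnt hε) (sepEnt_le_subEnt hε))

theorem subEnt_finite_le (hK : K.Finite) : subEnt T K ≤ 0 :=
  iSup₂_le fun _ _ => sepEnt_finite_le hK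

theorem subEnt_nonneg (hK : K.Nonempty) : 0 ≤ subEnt T K :=
  (sepEnt_nonneg hK).trans (sepEnt_le_subEnt one_pos)

theorem subEnt_singleton (x : X) : subEnt T {x} = 0 :=
  (subEnt_finite_le (finite_singleton x)).antisymm (subEnt_nonneg (singleton_nonempty x))

theorem sepEnt_insert_le (x : X) : sepEnt T ε (insert x K) ≤ max (sepEnt T ε K) 0 := by
  rw [← union_singleton]
  exact sepEnt_union_le.trans (max_le_max le_rfl (sepEnt_finite_le (finite_singleton x)))

theorem subEnt_insert_le (x : X) : subEnt T (insert x K) ≤ max (subEnt T K) 0 :=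
  iSup₂_le fun _ hε => (sepEnt_insert_le x).trans (max_le_max (sepEnt_le_subEnt hε) le_rfl)

theorem infinite_of_pos_sepEnt (h : 0 < sepEnt T ε K) : K.Infinite :=
  fun hK => (sepEnt_finite_le hK).not_gt h

theorem sepEnt_image_le (hfT : Semiconj f T S) (hδ : 0 ≤ δ)
    (hf : ∀ x y, dist x y ≤ δ → dist (f x) (f y) ≤ ε) :
    sepEnt S ε (f '' K) ≤ sepEnt T δ K := by
  obtain rfl | ⟨x, -⟩ := K.eq_empty_or_nonempty
  · rw [image_empty]
    exact expGrowthSup_monotone fun n => by simp [sepMaxCard_empty]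
  have : Nonempty X := ⟨x⟩
  refine expGrowthSup_monotone fun n => sepMaxCard_le_of_mapsTo (f := invFunOn f K) hδ
    (fun y hy => invFunOn_mem hy) fun y hy z hz hclose i hi => ?_
  rw [← invFunOn_eq hy, ← invFunOn_eq hz, ← (hfT.iterate_right i).eq, ← (hfT.iterate_right i).eq]
  exact hf _ _ (hclose i hi)

theorem sepEnt_le_image (hfT : Semiconj f T S) (hδ : 0 ≤ δ)
    (hf : ∀ x y, dist (f x) (f y) ≤ δ → dist x y ≤ ε) :
    sepEnt T ε K ≤ sepEnt S δ (f '' K) :=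
  expGrowthSup_monotone fun _ => sepMaxCard_le_of_mapsTo hδ (mapsTo_image f K)
    fun x _ y _ hclose i hi => hf _ _ <| by
      rw [(hfT.iterate_right i).eq, (hfT.iterate_right i).eq]
      exact hclose i hi

theorem subEnt_image_le (hfT : Semiconj f T S) (hf : UniformContinuous f) :
    subEnt S (f '' K) ≤ subEnt T K := by
  refine iSup₂_le fun ε hε => ?_
  obtain ⟨δ, hδ, hfδ⟩ := Metric.uniformContinuous_iff.1 hf ε hε
  refine (sepEnt_image_le hfT (half_pos hδ).le fun x y hxy => ?_).trans
    (sepEnt_le_subEnt (half_pos hδ))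
  exact (hfδ (hxy.trans_lt (half_lt_self hδ))).le

theorem sepEnt_le_image_self (hK : TotallyBounded K) (hε : 0 < ε) :
    sepEnt T ε K ≤ sepEnt T ε (T '' K) := by
  obtain ⟨t, ht, hKt⟩ := Metric.totallyBounded_iff.1 hK (ε / 2) (half_pos hε)
  lift t to Finset X using ht
  have hball (y : X) (n : ℕ) :
      sepMaxCard T n ε (K ∩ ball y (ε / 2)) ≤ sepMaxCard T n ε (T '' K) := by
    refine sepMaxCard_le_of_mapsTo (m := n) hε.le
      ((mapsTo_image T K).mono_left inter_subset_left) fun x hx z hz hclose i hi => ?_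
    cases i with
    | zero =>
      have := dist_triangle_right x z y
      simp only [iterate_zero_apply]
      linarith [mem_ball.1 hx.2, mem_ball.1 hz.2]
    | succ i => exact hclose i (i.lt_succ_self.trans hi)
  refine expGrowthSup_le_of_eventually_le (ENNReal.natCast_ne_top t.card) (.of_forall fun n => ?_)
  calc sepMaxCard T n ε K
      ≤ sepMaxCard T n ε (⋃ y ∈ t, K ∩ ball y (ε / 2)) :=
        sepMaxCard_mono fun x hx => by simpa [hx] using hKt hx
    _ ≤ ∑ y ∈ t, sepMaxCard T n ε (K ∩ ball y (ε / 2)) := sepMaxCard_biUnion_le _ _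
    _ ≤ ∑ _ ∈ t, sepMaxCard T n ε (T '' K) := by gcongr; exact hball _ n
    _ = t.card * sepMaxCard T n ε (T '' K) := by rw [Finset.sum_const, nsmul_eq_mul]

theorem sepEnt_le_image_iterate [CompactSpace X] (hε : 0 < ε) (m : ℕ) :
    sepEnt T ε K ≤ sepEnt T ε (T^[m] '' K) := by
  induction m with
  | zero => simp
  | succ m ih =>
    rw [iterate_succ', image_comp]
    exact ih.trans (sepEnt_le_image_self (isCompact_univ.totallyBounded.subset (subset_univ _)) hε)

theorem subEnt_image_iterate [CompactSpace X] (hT : Continuous T) (m : ℕ) :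
    subEnt T (T^[m] '' K) = subEnt T K :=
  (subEnt_image_le (Commute.iterate_self T m)
    (CompactSpace.uniformContinuous_of_continuous (hT.iterate m))).antisymm
    (iSup₂_mono fun _ hε => sepEnt_le_image_iterate hε m)

end Entropy

section Topology

variable [TopologicalSpace X] [TopologicalSpace Y] {f : X → Y} {A : Set X}

theorem accPt_principal_iff_infinite [T1Space X] {z : X} :
    AccPt z (𝓟 A) ↔ ∀ U ∈ 𝓝 z, (A ∩ U).Infinite := by
  refine ⟨fun h U hU => Infinite.of_accPt (inter_comm U A ▸ h.nhds_inter hU), fun h => ?_⟩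
  refine accPt_iff_nhds.2 fun U hU => ?_
  obtain ⟨y, ⟨hyA, hyU⟩, hyz⟩ := (h U hU).exists_notMem_finite (finite_singleton z)
  exact ⟨y, ⟨hyU, hyA⟩, hyz⟩

theorem accPt_image_of_injOn (hf : Continuous f) (hinj : InjOn f A) {z : X}
    [T1Space X] [T1Space Y] (h : AccPt z (𝓟 A)) : AccPt (f z) (𝓟 (f '' A)) := by
  rw [accPt_principal_iff_infinite] at h ⊢
  intro U hU
  refine ((h _ (hf.continuousAt hU)).image (hinj.mono inter_subset_left)).mono ?_
  exact image_inter_preimage f A U ▸ Subset.rfl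

theorem exists_accPt_of_accPt_image [T2Space Y] (hf : Continuous f) (hA : IsCompact A) {y : Y}
    (hy : AccPt y (𝓟 (f '' A))) : ∃ z, AccPt z (𝓟 A) ∧ f z = y := by
  have : (comap f (𝓝[≠] y) ⊓ 𝓟 A).NeBot := by
    rwa [← map_neBot_iff f, Filter.push_pull', map_principal]
  obtain ⟨z, -, hz⟩ := hA (f := comap f (𝓝[≠] y) ⊓ 𝓟 A) inf_le_right
  have hfz : f z = y := by
    have hlim : Tendsto f (𝓝 z ⊓ (comap f (𝓝[≠] y) ⊓ 𝓟 A)) (𝓝 y) :=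
      (tendsto_comap.mono_left (inf_le_right.trans inf_le_left)).mono_right nhdsWithin_le_nhds
    have : (𝓝 z ⊓ (comap f (𝓝[≠] y) ⊓ 𝓟 A)).NeBot := hz
    exact tendsto_nhds_unique (hf.continuousAt.mono_left inf_le_left) hlim
  refine ⟨z, ?_, hfz⟩
  refine accPt_iff_clusterPt.2 (hz.mono (inf_le_inf_right _ ?_))
  rw [nhdsWithin, comap_inf, comap_principal]
  refine inf_le_right.trans (principal_mono.2 fun x hx => ?_)
  rintro rfl
  exact hx hfz

theorem isCompact_insert_iUnion {ι : Type*} {B : ι → Set X} {p : X} (hB : ∀ i, IsCompact (B i))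
    (hp : Tendsto B cofinite (𝓝 p).smallSets) : IsCompact (insert p (⋃ i, B i)) := by
  rw [isCompact_iff_ultrafilter_le_nhds]
  intro l hl
  by_cases hlp : (l : Filter X) ≤ 𝓝 p
  · exact ⟨p, mem_insert _ _, hlp⟩
  obtain ⟨U, hU, hUl⟩ := Filter.not_le.1 hlp
  have hfin : {i | ¬B i ⊆ U}.Finite := eventually_cofinite.1 (tendsto_smallSets_iff.1 hp U hU)
  have hsub : insert p (⋃ i, B i) \ U ⊆ ⋃ i ∈ {i | ¬B i ⊆ U}, B i := by
    rintro x ⟨rfl | hx, hxU⟩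
    · exact absurd (mem_of_mem_nhds hU) hxU
    · obtain ⟨i, hi⟩ := mem_iUnion.1 hx
      exact mem_biUnion (fun h => hxU (h hi)) hi
  have hl' : (⋃ i ∈ {i | ¬B i ⊆ U}, B i) ∈ l :=
    mem_of_superset
      (inter_mem (le_principal_iff.1 hl) (Ultrafilter.compl_mem_iff_notMem.2 hUl)) hsub
  obtain ⟨x, hx, hlx⟩ := isCompact_iff_ultrafilter_le_nhds.1
    (hfin.isCompact_biUnion fun i _ => hB i) l (le_principal_iff.2 hl')
  exact ⟨x, subset_insert _ _ (iUnion₂_subset_iUnion _ _ hx), hlx⟩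

/-- The set `I` converges to `z`: every enumeration of `I` without repetition tends to `z`.
Finite sets converge to every point. -/
def ConvergesTo (I : Set X) (z : X) : Prop :=
  ∀ U ∈ 𝓝 z, (I \ U).Finite

namespace ConvergesTo

variable {I J : Set X} {z : X}

theorem mono (h : ConvergesTo I z) (hJ : J ⊆ I) : ConvergesTo J z :=
  fun U hU => (h U hU).subset (sdiff_subset_sdiff_left hJ)

theorem insert (h : ConvergesTo I z) : ConvergesTo (insert z I) z := fun U hU => by
  rw [insert_sdiff_of_mem _ (mem_of_mem_nhds hU)]
  exact h U hU

theorem image (h : ConvergesTo I z) (hf : Continuous f) : ConvergesTo (f '' I) (f z) := by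
  refine fun U hU => ((h _ (hf.continuousAt hU)).image f).subset ?_
  rintro _ ⟨⟨x, hx, rfl⟩, hxU⟩
  exact ⟨x, ⟨hx, hxU⟩, rfl⟩

theorem iUnion {ι : Type*} {C : ι → Set X} (h : ∀ i, ConvergesTo (C i) z)
    (hC : Tendsto C cofinite (𝓝 z).smallSets) : ConvergesTo (⋃ i, C i) z := by
  intro U hU
  have hfin : {i | ¬C i ⊆ U}.Finite := eventually_cofinite.1 (tendsto_smallSets_iff.1 hC U hU)
  refine (hfin.biUnion fun i _ => h i U hU).subset ?_
  rintro x ⟨hx, hxU⟩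
  obtain ⟨i, hi⟩ := mem_iUnion.1 hx
  exact mem_biUnion (fun h => hxU (h hi)) ⟨hi, hxU⟩

theorem isCompact (h : ConvergesTo I z) (hz : z ∈ I) : IsCompact I := by
  have hI : I = Insert.insert z (⋃ x : I, {x.1}) := by simp [insert_eq_of_mem hz]
  rw [hI]
  refine isCompact_insert_iUnion (fun _ => isCompact_singleton)
    (tendsto_smallSets_iff.2 fun U hU => ?_)
  simp only [singleton_subset_iff]
  exact eventually_cofinite.2 (((h U hU).preimage Subtype.val_injective.injOn).subset
    fun x hx => ⟨x.2, hx⟩)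

theorem accPt [T1Space X] (h : ConvergesTo I z) (hI : I.Infinite) : AccPt z (𝓟 I) :=
  accPt_principal_iff_infinite.2 fun U hU hfin =>
    hI (inter_union_sdiff I U ▸ hfin.union (h U hU))

theorem eq_of_accPt [T2Space X] (h : ConvergesTo I z) {x : X} (hx : AccPt x (𝓟 I)) : x = z := by
  by_contra hne
  obtain ⟨U, hU, V, hV, hUV⟩ := Filter.disjoint_iff.1 (disjoint_nhds_nhds.2 hne)
  exact accPt_principal_iff_infinite.1 hx U hU
    ((h V hV).subset fun y hy => ⟨hy.1, disjoint_left.1 hUV hy.2⟩)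

theorem subsingleton_accPt [T2Space X] (h : ConvergesTo I z) : {x | AccPt x (𝓟 I)}.Subsingleton :=
  fun _ hx _ hy => (h.eq_of_accPt hx).trans (h.eq_of_accPt hy).symm

end ConvergesTo

end Topology

section LocalEntropy

variable [PseudoMetricSpace X] {T : X → X} {ε : ℝ} {A : Set X} {z : X} {b : EReal}

theorem tendsto_smallSets_of_subset_ball {C : ℕ → Set X}
    (hC : ∀ k : ℕ, C k ⊆ ball z (1 / (k + 1))) : Tendsto C cofinite (𝓝 z).smallSets := by
  refine tendsto_smallSets_iff.2 fun U hU => ?_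
  obtain ⟨N, -, hN⟩ := nhds_basis_ball_inv_nat_succ.mem_iff.1 hU
  rw [Nat.cofinite_eq_atTop]
  filter_upwards [eventually_ge_atTop N] with k hk
  exact (hC k).trans ((ball_subset_ball (Nat.one_div_le_one_div hk)).trans hN)

theorem frequently_exp_lt_of_lt_expGrowthSup {u : ℕ → ℝ≥0∞} (h : b < expGrowthSup u) :
    ∃ᶠ n : ℕ in atTop, EReal.exp (b * n) < u n := by
  refine (frequently_lt_of_lt_limsup (by isBoundedDefault) h).and_eventually
    (eventually_ge_atTop 1) |>.mono fun n ⟨hn, hn1⟩ => ?_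
  rw [EReal.lt_div_iff (by exact_mod_cast hn1) (EReal.natCast_ne_top n)] at hn
  simpa only [ENNReal.exp_log] using EReal.exp_strictMono hn

/-- The entropy of `A` at the point `z` at scale `ε`, seen through arbitrarily small
neighbourhoods of `z`. -/
def locSepEnt (T : X → X) (ε : ℝ) (A : Set X) (z : X) : EReal :=
  ⨅ U ∈ 𝓝 z, sepEnt T ε (A ∩ U)

/-- The entropy of `A` at the point `z`; the points where it is positive are the entropy points
of `A`. The supremum over scales is taken after localizing, so that this may be smaller than
`subEnt T (A ∩ U)` for every neighbourhood `U` of `z`. -/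
def locEnt (T : X → X) (A : Set X) (z : X) : EReal :=
  ⨆ (ε : ℝ) (_ : 0 < ε), locSepEnt T ε A z

theorem locSepEnt_le_sepEnt {U : Set X} (hU : U ∈ 𝓝 z) : locSepEnt T ε A z ≤ sepEnt T ε (A ∩ U) :=
  iInf₂_le U hU

theorem locSepEnt_le_locEnt (hε : 0 < ε) : locSepEnt T ε A z ≤ locEnt T A z :=
  le_iSup₂_of_le ε hε le_rfl

theorem exists_lt_locSepEnt (h : b < locEnt T A z) : ∃ ε, 0 < ε ∧ b < locSepEnt T ε A z := by
  simpa only [locEnt, lt_iSup_iff, exists_prop] using h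

theorem exists_nhds_sepEnt_lt (h : locSepEnt T ε A z < b) : ∃ U ∈ 𝓝 z, sepEnt T ε (A ∩ U) < b := by
  simpa only [locSepEnt, iInf_lt_iff, exists_prop] using h

theorem accPt_of_pos_locEnt [T1Space X] (h : 0 < locEnt T A z) : AccPt z (𝓟 A) := by
  obtain ⟨ε, -, hz⟩ := exists_lt_locSepEnt h
  exact accPt_principal_iff_infinite.2 fun U hU =>
    infinite_of_pos_sepEnt (hz.trans_le (locSepEnt_le_sepEnt hU))

theorem exists_convergesTo_le_sepEnt (h : b < locSepEnt T ε A z) {V : Set X} (hV : V ∈ 𝓝 z) :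
    ∃ I ⊆ A ∩ V, ConvergesTo I z ∧ b ≤ sepEnt T ε I := by
  have hE (k : ℕ) : ∃ (n : ℕ) (E : Finset X), k ≤ n ∧ ↑E ⊆ A ∩ (V ∩ ball z (1 / (k + 1))) ∧
      IsSep T n ε (E : Set X) ∧ EReal.exp (b * n) < E.card := by
    have hU : V ∩ ball z (1 / (k + 1)) ∈ 𝓝 z :=
      inter_mem hV (ball_mem_nhds z Nat.one_div_pos_of_nat)
    obtain ⟨n, hkn, hn⟩ := frequently_atTop.1
      (frequently_exp_lt_of_lt_expGrowthSup (h.trans_le (locSepEnt_le_sepEnt hU))) k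
    obtain ⟨E, hEA, hE, hcard⟩ := exists_isSep_of_lt_sepMaxCard hn
    exact ⟨n, E, hkn, hEA, hE, hcard⟩
  choose n E hn hEA hE hcard using hE
  refine ⟨⋃ k, (E k : Set X), iUnion_subset fun k => (hEA k).trans (by gcongr; simp), ?_, ?_⟩
  · exact .iUnion (fun k U _ => (E k).finite_toSet.subset sdiff_subset)
      (tendsto_smallSets_of_subset_ball fun k => (hEA k).trans fun _ hx => hx.2.2)
  · refine Frequently.le_expGrowthSup (frequently_atTop.2 fun k => ⟨n k, hn k, ?_⟩)
    exact (hcard k).le.trans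
      ((hE k).card_le_sepMaxCard (subset_iUnion (fun k => (E k : Set X)) k))

theorem exists_convergesTo_locEnt_le_subEnt (T : X → X) (A : Set X) (z : X) :
    ∃ I ⊆ A, ConvergesTo I z ∧ locEnt T A z ≤ subEnt T I := by
  obtain hbot | hbot := eq_bot_or_bot_lt (locEnt T A z)
  · exact ⟨∅, empty_subset A, fun U _ => finite_empty.subset sdiff_subset, by simp [hbot]⟩
  obtain ⟨b, -, hb, hblim⟩ := exists_seq_strictMono_tendsto' hbot
  choose ε hε hbε using fun k => exists_lt_locSepEnt (hb k).2
  choose I hIA hI hbI using fun k =>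
    exists_convergesTo_le_sepEnt (hbε k) (ball_mem_nhds z (Nat.one_div_pos_of_nat (n := k)))
  refine ⟨⋃ k, I k, iUnion_subset fun k => (hIA k).trans inter_subset_left, .iUnion hI
    (tendsto_smallSets_of_subset_ball fun k => (hIA k).trans inter_subset_right), ?_⟩
  refine le_of_tendsto' hblim fun k => ?_
  exact (hbI k).trans ((sepEnt_le_subEnt (hε k)).trans (subEnt_mono (subset_iUnion I k)))

variable [CompactSpace X]

theorem exists_lt_locEnt (hb : 0 ≤ b) (h : b < subEnt T A) : ∃ z, b < locEnt T A z := by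
  obtain ⟨ε, hε, hbε⟩ : ∃ ε, 0 < ε ∧ b < sepEnt T ε A := by
    simpa only [subEnt, lt_iSup_iff, exists_prop] using h
  by_contra! hz
  suffices sepEnt T ε (A ∩ univ) < sepEnt T ε A from (inter_univ A ▸ this).false
  refine isCompact_univ.induction_on (p := fun s => sepEnt T ε (A ∩ s) < sepEnt T ε A)
    ?_ (fun s t hst ht => ?_) (fun s t hs ht => ?_) fun z _ => ?_
  · exact (inter_empty A ▸ sepEnt_finite_le finite_empty).trans_lt (hb.trans_lt hbε)
  · exact (sepEnt_mono (inter_subset_inter_right A hst)).trans_lt ht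
  · rw [inter_union_distrib_left]
    exact sepEnt_union_le.trans_lt (max_lt hs ht)
  · obtain ⟨U, hU, hUlt⟩ := exists_nhds_sepEnt_lt
      ((locSepEnt_le_locEnt hε).trans_lt ((hz z).trans_lt hbε))
    exact ⟨U, mem_nhdsWithin_of_mem_nhds hU, hUlt⟩

theorem exists_forall_nhds_exists_lt_locEnt (h : 0 < subEnt T A) :
    ∃ z, ∀ U ∈ 𝓝 z, ∀ b < subEnt T A, ∃ x ∈ U, b < locEnt T A x := by
  by_contra! hz
  suffices ∃ b < subEnt T A, ∀ x ∈ univ, locEnt T A x ≤ b by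
    obtain ⟨b, hb, hloc⟩ := this
    obtain ⟨x, hx⟩ := exists_lt_locEnt (le_max_right b 0) (max_lt hb h)
    exact (hloc x (mem_univ x)).not_gt ((le_max_left b 0).trans_lt hx)
  refine isCompact_univ.induction_on (p := fun s => ∃ b < subEnt T A, ∀ x ∈ s, locEnt T A x ≤ b)
    ⟨0, h, by simp⟩ (fun s t hst ht => ?_) (fun s t hs ht => ?_) fun z _ => ?_
  · exact ht.imp fun b hb => ⟨hb.1, fun x hx => hb.2 x (hst hx)⟩
  · obtain ⟨b, hb, hbs⟩ := hs
    obtain ⟨c, hc, hct⟩ := ht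
    exact ⟨max b c, max_lt hb hc, fun x hx => le_max_iff.2 (hx.imp (hbs x) (hct x))⟩
  · obtain ⟨U, hU, b, hb, hUb⟩ := hz z
    exact ⟨U, mem_nhdsWithin_of_mem_nhds hU, b, hb, hUb⟩

end LocalEntropy

section Obstruction

theorem exists_injective_forall_mem {α : Type*} {s : ℕ → Set α} (hs : ∀ n, (s n).Infinite) :
    ∃ f : ℕ → α, Injective f ∧ ∀ n, f n ∈ s n := by
  classical
  choose g hgs hgF using fun n F => (hs n).exists_notMem_finset F
  let f : ℕ → α := WellFoundedLT.fix fun n f => g n (Finset.univ.image fun i : Fin n => f i i.2)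
  have hf (n : ℕ) : f n = g n (Finset.univ.image fun i : Fin n => f i) := WellFoundedLT.fix_eq _ n
  refine ⟨f, .of_lt_imp_ne fun m n hmn heq => ?_, fun n => hf n ▸ hgs n _⟩
  exact hgF n _ (hf n ▸ heq ▸ Finset.mem_image_of_mem (fun i : Fin n => f i)
    (Finset.mem_univ (⟨m, hmn⟩ : Fin n)))

section PseudoMetric

variable [PseudoMetricSpace X] {T : X → X} {n m : ℕ} {ε δ : ℝ} {x p q : X} {c : EReal}
  {K L B U : Set X}

/-- The open Bowen ball: the points whose orbit stays within `ε` of the orbit of `x` up to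
time `n - 1`. -/
def bowenBall (T : X → X) (n : ℕ) (ε : ℝ) (x : X) : Set X :=
  {y | ∀ i < n, dist (T^[i] y) (T^[i] x) < ε}

theorem mem_bowenBall_self (hε : 0 < ε) : x ∈ bowenBall T n ε x := fun i _ => by
  rwa [dist_self]

theorem isOpen_bowenBall (hT : Continuous T) : IsOpen (bowenBall T n ε x) := by
  have : bowenBall T n ε x = ⋂ i ∈ Iio n, T^[i] ⁻¹' ball (T^[i] x) ε := by
    ext; simp [bowenBall]
  rw [this]
  exact (finite_Iio n).isOpen_biInter fun i _ => isOpen_ball.preimage (hT.iterate i)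

theorem bowenBall_mono (hmn : m ≤ n) (h : δ ≤ ε) : bowenBall T n δ x ⊆ bowenBall T m ε x :=
  fun _ hy i hi => (hy i (hi.trans_le hmn)).trans_le h

theorem bowenBall_succ_subset_ball : bowenBall T (n + 1) ε x ⊆ ball x ε :=
  fun _ hy => hy 0 n.succ_pos

theorem sepMaxCard_le_one_of_subset_bowenBall (h : K ⊆ bowenBall T n (ε / 2) x) :
    sepMaxCard T n ε K ≤ 1 :=
  sepMaxCard_le_one fun y hy z hz i hi => by
    have := dist_triangle_right (T^[i] y) (T^[i] z) (T^[i] x)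
    linarith [h hy i hi, h hz i hi]

theorem subEnt_le_of_finite_sdiff (h : (K \ L).Finite) : subEnt T K ≤ max (subEnt T L) 0 :=
  calc subEnt T K ≤ subEnt T (L ∪ K \ L) := subEnt_mono (by simp)
    _ ≤ max (subEnt T L) 0 := subEnt_union_le.trans (max_le_max le_rfl (subEnt_finite_le h))

-- The points of `B` close to `q` are `ε`-indistinguishable up to any given time: cutting `B` down
-- to a neighbourhood of `q` disposes of the finitely many times at which the bound may fail.
theorem ConvergesTo.exists_sepMaxCard_le_exp (h : ConvergesTo B q) (hT : Continuous T)
    (hε : 0 < ε) (hc : 0 < c) (hB : sepEnt T ε B < c) (hU : U ∈ 𝓝 q) :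
    ∃ C ⊆ U, q ∈ C ∧ ConvergesTo C q ∧ subEnt T C = max (subEnt T B) 0 ∧
      ∀ n : ℕ, sepMaxCard T n ε C ≤ EReal.exp (c * n) := by
  have hqB : sepEnt T ε (Insert.insert q B) < c := (sepEnt_insert_le q).trans_lt (max_lt hB hc)
  obtain ⟨N, hN⟩ := eventually_atTop.1 (eventually_le_exp hqB)
  have hV : U ∩ bowenBall T N (ε / 2) q ∈ 𝓝 q :=
    inter_mem hU ((isOpen_bowenBall hT).mem_nhds (mem_bowenBall_self (half_pos hε)))
  have hqC : q ∈ Insert.insert q B ∩ (U ∩ bowenBall T N (ε / 2) q) :=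
    ⟨mem_insert q B, mem_of_mem_nhds hV⟩
  refine ⟨Insert.insert q B ∩ (U ∩ bowenBall T N (ε / 2) q), fun x hx => hx.2.1, hqC,
    h.insert.mono inter_subset_left, le_antisymm ?_ (max_le ?_ (subEnt_nonneg ⟨q, hqC⟩)),
    fun n => ?_⟩
  · exact (subEnt_mono inter_subset_left).trans (subEnt_insert_le q)
  · refine (subEnt_le_of_finite_sdiff ((h _ hV).subset ?_)).trans
      (max_le le_rfl (subEnt_nonneg ⟨q, hqC⟩))
    exact fun x hx => ⟨hx.1, fun hxV => hx.2 ⟨mem_insert_of_mem q hx.1, hxV⟩⟩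
  · obtain hn | hn := le_total N n
    · exact (sepMaxCard_mono inter_subset_left).trans (hN n hn)
    · calc sepMaxCard T n ε _ ≤ 1 := sepMaxCard_le_one_of_subset_bowenBall
            fun x hx => bowenBall_mono hn le_rfl hx.2.2
        _ ≤ EReal.exp (c * n) := EReal.one_le_exp_iff.2 (mul_nonneg hc.le n.cast_nonneg')

theorem sepEnt_iUnion_le {B : ℕ → Set X} (hc : 0 ≤ c)
    (hcard : ∀ j n : ℕ, sepMaxCard T n ε (B j) ≤ EReal.exp (c * n))
    (hB : ∀ j, B j ⊆ bowenBall T j (ε / 2) p) : sepEnt T ε (⋃ j, B j) ≤ c := by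
  have hle (n : ℕ) : sepMaxCard T n ε (⋃ j, B j) ≤ ((n : ℝ≥0∞) + 1) * EReal.exp (c * n) := by
    have hsub : ⋃ j, B j ⊆ (⋃ j ∈ Finset.range n, B j) ∪ bowenBall T n (ε / 2) p := by
      refine iUnion_subset fun j => ?_
      obtain hj | hj := lt_or_ge j n
      · exact (subset_biUnion_of_mem (u := B) (Finset.mem_coe.2 (Finset.mem_range.2 hj))).trans
          subset_union_left
      · exact ((hB j).trans (bowenBall_mono hj le_rfl)).trans subset_union_right
    calc sepMaxCard T n ε (⋃ j, B j)
        ≤ ∑ j ∈ Finset.range n, sepMaxCard T n ε (B j) +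
            sepMaxCard T n ε (bowenBall T n (ε / 2) p) :=
          (sepMaxCard_mono hsub).trans
            (sepMaxCard_union_le.trans (by gcongr; exact sepMaxCard_biUnion_le _ _))
      _ ≤ ∑ _ ∈ Finset.range n, EReal.exp (c * n) + EReal.exp (c * n) := by
          gcongr
          · exact hcard _ n
          · exact (sepMaxCard_le_one_of_subset_bowenBall Subset.rfl).trans
              (EReal.one_le_exp_iff.2 (mul_nonneg hc n.cast_nonneg'))
      _ = ((n : ℝ≥0∞) + 1) * EReal.exp (c * n) := by
          rw [Finset.sum_const, Finset.card_range, nsmul_eq_mul, add_one_mul]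
  calc sepEnt T ε (⋃ j, B j)
      ≤ expGrowthSup ((fun n : ℕ => (n : ℝ≥0∞) + 1) * fun n : ℕ => EReal.exp (c * n)) :=
        expGrowthSup_monotone hle
    _ ≤ 0 + c := by
        refine (expGrowthSup_mul_le ?_ ?_).trans_eq
          (by rw [expGrowthSup_natCast_add_one, expGrowthSup_exp]) <;>
          simp [expGrowthSup_natCast_add_one]
    _ = c := zero_add c

theorem subEnt_le_of_finite_inter {B : ℕ → Set X} {j₀ : ℕ} (hc : 0 ≤ c)
    (hcard : ∀ j n : ℕ, sepMaxCard T n (1 / (j + 1)) (B j) ≤ EReal.exp (c * n))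
    (hB : ∀ j : ℕ, B j ⊆ bowenBall T (j + 1) (1 / (j + 1)) p)
    (hK : K ⊆ insert p (⋃ j, B j)) (hfin : ∀ j ≠ j₀, (K ∩ B j).Finite) :
    subEnt T K ≤ max c (subEnt T (B j₀)) := by
  have hdiff : subEnt T (K \ B j₀) ≤ c := iSup₂_le fun ε hε => by
    obtain ⟨J, hJ⟩ := exists_nat_one_div_lt (half_pos hε)
    have hJε (j : ℕ) : (1 : ℝ) / ((J + j : ℕ) + 1) ≤ ε / 2 :=
      (Nat.one_div_le_one_div (J.le_add_right j)).trans hJ.le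
    have htail : sepEnt T ε (⋃ j, B (J + j)) ≤ c := by
      refine sepEnt_iUnion_le (p := p) hc (fun j n => ?_) fun j => ?_
      · exact (sepMaxCard_anti ((hJε j).trans (half_le_self hε.le))).trans (hcard (J + j) n)
      · exact (hB (J + j)).trans (bowenBall_mono (by omega) (hJε j))
    have hhead : (insert p (⋃ j ∈ Iio J \ {j₀}, K ∩ B j)).Finite :=
      (((finite_Iio J).subset sdiff_subset).biUnion fun j hj => hfin j hj.2).insert p
    calc sepEnt T ε (K \ B j₀)
        ≤ sepEnt T ε ((⋃ j, B (J + j)) ∪ insert p (⋃ j ∈ Iio J \ {j₀}, K ∩ B j)) := by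
          refine sepEnt_mono fun x ⟨hxK, hx₀⟩ => ?_
          obtain rfl | hx := hK hxK
          · exact .inr (mem_insert x _)
          obtain ⟨j, hj⟩ := mem_iUnion.1 hx
          obtain hJj | hJj := le_or_gt J j
          · exact .inl (mem_iUnion.2 ⟨j - J, by rwa [Nat.add_sub_cancel' hJj]⟩)
          · exact .inr (.inr (mem_biUnion
              (show j ∈ Iio J \ {j₀} from ⟨hJj, fun h => hx₀ (h ▸ hj)⟩) ⟨hxK, hj⟩))
      _ ≤ c := sepEnt_union_le.trans (max_le htail ((sepEnt_finite_le hhead).trans hc))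
  calc subEnt T K ≤ subEnt T (K \ B j₀ ∪ B j₀) := subEnt_mono (by simp)
    _ ≤ max c (subEnt T (B j₀)) := subEnt_union_le.trans (max_le_max hdiff le_rfl)

end PseudoMetric

variable [MetricSpace X] {T : X → X} {c h : EReal}

theorem HUL.exists_subEnt_iUnion_le (hHUL : HUL T) {p : X} {q : ℕ → X} {B : ℕ → Set X}
    (hq : Injective q) (hqB : ∀ j, q j ∈ B j) (hBq : ∀ j, ConvergesTo (B j) (q j)) (hc : 0 ≤ c)
    (hcard : ∀ j n : ℕ, sepMaxCard T n (1 / (j + 1)) (B j) ≤ EReal.exp (c * n))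
    (hB : ∀ j : ℕ, B j ⊆ bowenBall T (j + 1) (1 / (j + 1)) p) :
    ∃ j₀, subEnt T (⋃ j, B j) ≤ max c (subEnt T (B j₀)) := by
  have hcompact : IsCompact (insert p (⋃ j, B j)) :=
    isCompact_insert_iUnion (fun j => (hBq j).isCompact (hqB j))
      (tendsto_smallSets_of_subset_ball fun j => (hB j).trans bowenBall_succ_subset_ball)
  obtain ⟨K, hKB, -, -, hK, hacc⟩ :=
    hHUL _ (insert_nonempty p _) hcompact _ (subEnt_nonneg (insert_nonempty p _)) le_rfl
  have hsub : {j | (K ∩ B j).Infinite}.Subsingleton := fun i hi j hj => by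
    have hacc' {j} (hj : (K ∩ B j).Infinite) : AccPt (q j) (𝓟 K) :=
      (((hBq j).mono inter_subset_right).accPt hj).mono (principal_mono.2 inter_subset_left)
    exact hq (hacc (hacc' hi) (hacc' hj))
  obtain ⟨j₀, hj₀⟩ : ∃ j₀, ∀ j ≠ j₀, (K ∩ B j).Finite := by
    by_cases hne : ∃ j₀, (K ∩ B j₀).Infinite
    · exact hne.imp fun j₀ hj₀ j hj => not_infinite.1 fun hinf => hj (hsub hinf hj₀)
    · exact ⟨0, fun j _ => not_infinite.1 fun hinf => hne ⟨j, hinf⟩⟩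
  refine ⟨j₀, ((subEnt_mono (subset_insert p _)).trans hK.ge).trans ?_⟩
  exact subEnt_le_of_finite_inter hc hcard hB hKB hj₀

theorem not_hul_of_infinite_setOf_convergesTo [CompactSpace X] (hT : Continuous T) (hc : 0 < c)
    (hch : c < h)
    (hinf : ∀ b < h, ∀ ε > 0,
      {q | ∃ B, ConvergesTo B q ∧ subEnt T B ∈ Ioo b h ∧ sepEnt T ε B < c}.Infinite) :
    ¬HUL T := by
  intro hHUL
  obtain ⟨b, -, hb, hblim⟩ := exists_seq_strictMono_tendsto' hch
  obtain ⟨q, hq, hqB⟩ := exists_injective_forall_mem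
    fun n : ℕ => hinf (b n) (hb n).2 (1 / (n + 1)) Nat.one_div_pos_of_nat
  choose B hBq hBh hBc using hqB
  obtain ⟨p, hp⟩ := exists_clusterPt_of_compactSpace (map q atTop)
  have hfreq (n : ℕ) : ∃ᶠ k in atTop, q k ∈ bowenBall T (n + 1) (1 / (n + 1)) p :=
    (mapClusterPt_iff_frequently.1 hp) _
      ((isOpen_bowenBall hT).mem_nhds (mem_bowenBall_self Nat.one_div_pos_of_nat))
  obtain ⟨φ, hφ, hφp⟩ := extraction_forall_of_frequently hfreq
  choose C hCU hqC hCq hCent hCcard using fun n => (hBq (φ n)).exists_sepMaxCard_le_exp hT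
    Nat.one_div_pos_of_nat hc (hBc (φ n)) ((isOpen_bowenBall hT).mem_nhds (hφp n))
  obtain ⟨j₀, hj₀⟩ := hHUL.exists_subEnt_iUnion_le (hq.comp hφ.injective) hqC hCq hc.le
    (fun j n => (sepMaxCard_anti (Nat.one_div_le_one_div (hφ.id_le j))).trans (hCcard j n)) hCU
  have hle : h ≤ subEnt T (⋃ n, C n) := by
    refine le_of_tendsto' (hblim.comp hφ.tendsto_atTop) fun n => ?_
    calc b (φ n) ≤ max (subEnt T (B (φ n))) 0 := (hBh (φ n)).1.le.trans (le_max_left _ _)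
      _ = subEnt T (C n) := (hCent n).symm
      _ ≤ subEnt T (⋃ n, C n) := subEnt_mono (subset_iUnion C n)
  refine (hle.trans hj₀).not_gt (max_lt hch ?_)
  rw [hCent]
  exact max_lt (hBh (φ j₀)).2 (hc.trans hch)

end Obstruction

namespace NatExt

section Coord

variable {T : X → X} {u v x : NatExt T} {j : ℕ} {F : Set X}

/-- The projection of the natural extension to its `m`-th coordinate, with coordinates numbered
from `0`; `coord T 0` is the factor map onto `(X, T)`. -/
def coord (T : X → X) (m : ℕ) (x : NatExt T) : X := x.1 m

theorem ext_coord (h : ∀ m, coord T m u = coord T m v) : u = v :=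
  Subtype.ext (funext h)

theorem map_coord_succ (j : ℕ) (x : NatExt T) : T (coord T (j + 1) x) = coord T j x := x.2 j

theorem iterate_coord_add (i : ℕ) (x : NatExt T) : T^[i] (coord T (j + i) x) = coord T j x := by
  induction i with
  | zero => rfl
  | succ i ih => rw [iterate_succ_apply, ← add_assoc, map_coord_succ (j + i) x, ih]

theorem iterate_coord (m : ℕ) (x : NatExt T) : T^[m] (coord T m x) = coord T 0 x := by
  simpa only [zero_add] using iterate_coord_add (j := 0) m x

theorem iterate_image_coord (m : ℕ) (I : Set (NatExt T)) :
    T^[m] '' (coord T m '' I) = coord T 0 '' I := by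
  simp only [image_image, iterate_coord]

theorem coord_zero_surjective (hsurj : Surjective T) : Surjective (coord T 0) := by
  intro x
  obtain ⟨g, hg⟩ := hsurj.hasRightInverse
  exact ⟨⟨fun n => g^[n] x, fun i => (congrArg T (iterate_succ_apply' g i x)).trans (hg _)⟩, rfl⟩

theorem semiconj_coord (m : ℕ) : Semiconj (coord T m) (natExtShift T) T := by
  intro x
  cases m with
  | zero => rfl
  | succ m => exact (map_coord_succ m x).symm

theorem coord_mem_periodicPts (hF : F.Finite) (h : ∀ m, coord T m x ∈ F) (j : ℕ) :
    coord T j x ∈ periodicPts T := by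
  obtain ⟨a, -, b, -, hab, heq⟩ : ∃ a ∈ univ, ∃ b ∈ univ, a < b ∧
      coord T (j + a) x = coord T (j + b) x :=
    infinite_univ.exists_lt_map_eq_of_mapsTo (fun i _ => h (j + i)) hF
  have hper : IsPeriodicPt T (b - a) (coord T (j + a) x) := by
    have := iterate_coord_add (j := j + a) (b - a) x
    rwa [show j + a + (b - a) = j + b by omega, ← heq] at this
  have := mk_mem_periodicPts (Nat.sub_pos_of_lt hab) (hper.apply_iterate a)
  rwa [iterate_coord_add] at this

-- A map is injective on its periodic points, so a point of the natural extension all of whose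
-- coordinates are periodic is determined by its zeroth coordinate.
theorem eq_of_coord_mem_finite (hF : F.Finite) (h₀ : coord T 0 u = coord T 0 v)
    (hu : ∀ m, coord T m u ∈ F) (hv : ∀ m, coord T m v ∈ F) : u = v := by
  refine ext_coord fun m => ((bijOn_periodicPts T).iterate m).injOn
    (coord_mem_periodicPts hF hu m) (coord_mem_periodicPts hF hv m) ?_
  rw [iterate_coord, iterate_coord, h₀]

end Coord

variable [MetricSpace X] {T : X → X} {u v : NatExt T} {ε : ℝ} {I : Set (NatExt T)}

theorem continuous_coord (m : ℕ) : Continuous (coord T m) :=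
  (continuous_apply m).comp
    (continuous_subtype_val (X := ℕ → X) (p := fun x => ∀ i, T (x (i + 1)) = x i))

theorem compactSpace [CompactSpace X] (hT : Continuous T) : CompactSpace (NatExt T) := by
  have hclosed : IsClosed {x : ℕ → X | ∀ i, T (x (i + 1)) = x i} := by
    rw [ofPred_forall]
    exact isClosed_iInter fun i =>
      isClosed_eq (hT.comp (continuous_apply (i + 1))) (continuous_apply i)
  exact isCompact_iff_compactSpace.1 hclosed.isCompact

theorem continuous_shift (hT : Continuous T) : Continuous (natExtShift T) :=
  Continuous.subtype_mk (continuous_pi fun j =>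
    (hT.comp (continuous_coord j)).congr fun x => (semiconj_coord j x).symm) _

theorem dist_coord_zero_le (h : dist u v < 1) : dist (coord T 0 u) (coord T 0 v) ≤ dist u v :=
  PiCountable.dist_le_dist_pi_of_dist_lt (F := fun _ : ℕ => X) (x := u.1) (y := v.1) (i := 0)
    (h.trans_eq (pow_zero _).symm)

theorem uniformity_eq_iInf_comap_coord :
    𝓤 (NatExt T) = ⨅ m, comap (Prod.map (coord T m) (coord T m)) (𝓤 X) := by
  have h : 𝓤 (NatExt T) = comap (fun q : NatExt T × NatExt T => (q.1.1, q.2.1)) (𝓤 (ℕ → X)) := rfl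
  rw [h, Pi.uniformity, comap_iInf]
  exact iInf_congr fun m => comap_comap

theorem exists_coord [CompactSpace X] (hT : Continuous T) (hε : 0 < ε) :
    ∃ m, ∃ δ > 0, ∀ u v : NatExt T, dist (coord T m u) (coord T m v) ≤ δ → dist u v ≤ ε := by
  have hanti : Antitone fun m => comap (Prod.map (coord T m) (coord T m)) (𝓤 X) := by
    refine antitone_nat_of_succ_le fun m => ?_
    have hTu := CompactSpace.uniformContinuous_of_continuous hT
    have hcoord : coord T m = T ∘ coord T (m + 1) := funext fun x => (map_coord_succ m x).symm
    rw [hcoord, ← Prod.map_comp_map, ← comap_comap]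
    exact comap_mono hTu.le_comap
  have hmem := dist_mem_uniformity (α := NatExt T) hε
  rw [uniformity_eq_iInf_comap_coord, mem_iInf_of_directed hanti.directed_ge] at hmem
  obtain ⟨m, V, hV, hVε⟩ := hmem
  obtain ⟨δ, hδ, hδV⟩ := Metric.mem_uniformity_dist.1 hV
  refine ⟨m, δ / 2, half_pos hδ, fun u v huv => le_of_lt ?_⟩
  exact @hVε (u, v) (hδV (huv.trans_lt (half_lt_self hδ)))

variable [CompactSpace X]

theorem sepEnt_image_coord_le (hε : 0 < ε) (hε₁ : ε < 1) (m : ℕ) :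
    sepEnt T ε (coord T m '' I) ≤ sepEnt (natExtShift T) ε I :=
  calc sepEnt T ε (coord T m '' I) ≤ sepEnt T ε (coord T 0 '' I) :=
        iterate_image_coord m I ▸ sepEnt_le_image_iterate hε m
    _ ≤ sepEnt (natExtShift T) ε I := sepEnt_image_le (semiconj_coord 0) hε.le fun _ _ h =>
        (dist_coord_zero_le (h.trans_lt hε₁)).trans h

theorem subEnt_image_coord (hT : Continuous T) (m : ℕ) :
    subEnt T (coord T m '' I) = subEnt (natExtShift T) I := by
  have hcoord (k : ℕ) : subEnt T (coord T k '' I) = subEnt T (coord T 0 '' I) := by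
    rw [← subEnt_image_iterate hT k, iterate_image_coord]
  have := compactSpace hT
  refine le_antisymm (subEnt_image_le (semiconj_coord m)
    (CompactSpace.uniformContinuous_of_continuous (continuous_coord m))) (iSup₂_le fun ε hε => ?_)
  obtain ⟨k, δ, hδ, hk⟩ := exists_coord hT hε
  calc sepEnt (natExtShift T) ε I ≤ sepEnt T δ (coord T k '' I) :=
        sepEnt_le_image (semiconj_coord k) hδ.le hk
    _ ≤ subEnt T (coord T k '' I) := sepEnt_le_subEnt hδ
    _ = subEnt T (coord T m '' I) := (hcoord k).trans (hcoord m).symm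

end NatExt

section Factor

variable [PseudoMetricSpace Y] [MetricSpace X] {S : Y → Y} {T : X → X} {π : Y → X}

theorem Lowerable.of_extension (hcont : Continuous π)
    (hπ : ∀ I, subEnt T (π '' I) = subEnt S I) (hsurj : Surjective π) (h : Lowerable S) :
    Lowerable T := by
  intro a ha₀ ha
  rw [← image_univ_of_surjective hsurj, hπ] at ha
  obtain ⟨K, hne, hK, rfl⟩ := h a ha₀ ha
  exact ⟨π '' K, hne.image π, hK.image hcont, hπ K⟩

theorem HerLowerable.of_factor (hcont : Continuous π)
    (hπ : ∀ I, subEnt T (π '' I) = subEnt S I) (h : HerLowerable T) : HerLowerable S := by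
  intro K hne hK a ha₀ ha
  obtain ⟨L, hLK, hLne, hL, rfl⟩ :=
    h (π '' K) (hne.image π) (hK.image hcont) a ha₀ (ha.trans (hπ K).ge)
  have himage : π '' (K ∩ π ⁻¹' L) = L := by
    rw [image_inter_preimage, inter_eq_right.2 hLK]
  exact ⟨K ∩ π ⁻¹' L, inter_subset_left, image_nonempty.1 (himage ▸ hLne),
    hK.inter_right (hL.isClosed.preimage hcont), by rw [← hπ, himage]⟩

variable [CompactSpace Y]

theorem Lowerable.of_factor (hcont : Continuous π)
    (hπ : ∀ I, subEnt T (π '' I) = subEnt S I) (hsurj : Surjective π) (h : Lowerable T) :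
    Lowerable S := by
  intro a ha₀ ha
  rw [← hπ, image_univ_of_surjective hsurj] at ha
  obtain ⟨K, hne, hK, rfl⟩ := h a ha₀ ha
  exact ⟨π ⁻¹' K, hne.preimage hsurj, (hK.isClosed.preimage hcont).isCompact,
    by rw [← hπ, image_preimage_eq K hsurj]⟩

theorem HerLowerable.of_extension (hcont : Continuous π)
    (hπ : ∀ I, subEnt T (π '' I) = subEnt S I) (hsurj : Surjective π) (h : HerLowerable S) :
    HerLowerable T := by
  intro K hne hK a ha₀ ha
  rw [← image_preimage_eq K hsurj, hπ] at ha
  obtain ⟨L, hLK, hLne, hL, rfl⟩ :=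
    h (π ⁻¹' K) (hne.preimage hsurj) (hK.isClosed.preimage hcont).isCompact a ha₀ ha
  exact ⟨π '' L, image_subset_iff.2 hLK, hLne.image π, hL.image hcont, hπ L⟩

theorem HUL.of_extension (hcont : Continuous π) (hπ : ∀ I, subEnt T (π '' I) = subEnt S I)
    (hsurj : Surjective π) (h : HUL S) : HUL T := by
  intro K hne hK a ha₀ ha
  rw [← image_preimage_eq K hsurj, hπ] at ha
  obtain ⟨L, hLK, hLne, hL, rfl, hacc⟩ :=
    h (π ⁻¹' K) (hne.preimage hsurj) (hK.isClosed.preimage hcont).isCompact a ha₀ ha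
  refine ⟨π '' L, image_subset_iff.2 hLK, hLne.image π, hL.image hcont, hπ L, fun x hx y hy => ?_⟩
  obtain ⟨u, hu, rfl⟩ := exists_accPt_of_accPt_image hcont hL hx
  obtain ⟨v, hv, rfl⟩ := exists_accPt_of_accPt_image hcont hL hy
  exact congrArg π (hacc hu hv)

end Factor

section AsympHExpansive

variable [PseudoMetricSpace X] [PseudoMetricSpace Y] {T : X → X} {S : Y → Y} {ε δ : ℝ}

theorem hStar_mono (h : δ ≤ ε) : hStar T δ ≤ hStar T ε :=
  iSup_mono fun _ => subEnt_mono fun _ hy n => (hy n).trans h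

theorem hStar_nonneg [Nonempty X] (hε : 0 ≤ ε) : 0 ≤ hStar T ε := by
  obtain ⟨x⟩ := ‹Nonempty X›
  exact le_iSup_of_le x (subEnt_nonneg ⟨x, fun n => by rwa [dist_self]⟩)

theorem AsympHExpansive.of_hStar_le [Nonempty Y]
    (h : ∀ ε > 0, ∃ δ > 0, hStar S δ ≤ hStar T ε) (hT : AsympHExpansive T) :
    AsympHExpansive S := by
  refine tendsto_order.2 ⟨fun a ha => ?_, fun a ha => ?_⟩
  · filter_upwards [self_mem_nhdsWithin] with ε hε using ha.trans_le (hStar_nonneg (le_of_lt hε))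
  · obtain ⟨ε, hεa, hε⟩ := ((hT.eventually_lt_const ha).and self_mem_nhdsWithin).exists
    obtain ⟨δ, hδ, hle⟩ := h ε hε
    filter_upwards [Ioo_mem_nhdsGT hδ] with r hr
    exact (hStar_mono hr.2.le).trans_lt (hle.trans_lt hεa)

end AsympHExpansive

namespace NatExt

variable [MetricSpace X] [CompactSpace X] {T : X → X} {ε : ℝ}

theorem hStar_natExtShift_le (hT : Continuous T) (hε₁ : ε < 1) :
    hStar (natExtShift T) ε ≤ hStar T ε := by
  refine iSup_le fun y => ?_
  rw [← subEnt_image_coord hT 0]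
  refine le_iSup_of_le (coord T 0 y) (subEnt_mono ?_)
  rintro _ ⟨u, hu, rfl⟩ n
  rw [← (semiconj_coord 0).iterate_right n, ← (semiconj_coord 0).iterate_right n]
  exact (dist_coord_zero_le ((hu n).trans_lt hε₁)).trans (hu n)

theorem exists_hStar_le (hT : Continuous T) (hsurj : Surjective T) (hε : 0 < ε) :
    ∃ δ > 0, hStar T δ ≤ hStar (natExtShift T) ε := by
  obtain ⟨m, δ, hδ, hm⟩ := exists_coord hT hε
  have := compactSpace hT
  have hcoord (i : ℕ) (w : NatExt T) : coord T m ((natExtShift T)^[i] ((natExtShift T)^[m] w)) =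
      T^[i] (coord T 0 w) := by
    rw [(semiconj_coord m).iterate_right i, (semiconj_coord m).iterate_right m, iterate_coord]
  refine ⟨δ, hδ, iSup_le fun x => ?_⟩
  obtain ⟨v, rfl⟩ := coord_zero_surjective hsurj x
  calc subEnt T (Phi T δ (coord T 0 v))
      = subEnt (natExtShift T) (coord T 0 ⁻¹' Phi T δ (coord T 0 v)) := by
        rw [← subEnt_image_coord hT 0, image_preimage_eq _ (coord_zero_surjective hsurj)]
    _ = subEnt (natExtShift T)
          ((natExtShift T)^[m] '' (coord T 0 ⁻¹' Phi T δ (coord T 0 v))) :=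
        (subEnt_image_iterate (continuous_shift hT) m).symm
    _ ≤ subEnt (natExtShift T) (Phi (natExtShift T) ε ((natExtShift T)^[m] v)) := by
        refine subEnt_mono ?_
        rintro _ ⟨w, hw, rfl⟩ i
        exact hm _ _ (by rw [hcoord, hcoord]; exact hw i)
    _ ≤ hStar (natExtShift T) ε := le_iSup (fun y => subEnt _ (Phi _ ε y)) _

theorem asympHExpansive_iff (hT : Continuous T) (hsurj : Surjective T) :
    AsympHExpansive (natExtShift T) ↔ AsympHExpansive T := by
  obtain hX | hX := isEmpty_or_nonempty X
  · have : IsEmpty (NatExt T) := ⟨fun u => hX.false (coord T 0 u)⟩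
    simp [AsympHExpansive, hStar]
  have : Nonempty (NatExt T) := (coord_zero_surjective hsurj).nonempty
  refine ⟨.of_hStar_le fun ε hε => exists_hStar_le hT hsurj hε, .of_hStar_le fun ε hε => ?_⟩
  have hδ : 0 < min ε (1 / 2) := lt_min hε one_half_pos
  exact ⟨min ε (1 / 2), hδ, (hStar_natExtShift_le hT
    ((min_le_right _ _).trans_lt one_half_lt_one)).trans (hStar_mono (min_le_left _ _))⟩

end NatExt

theorem exists_isCompact_subEnt_eq_of_convergesTo [MetricSpace X] {T : X → X} {I K : Set X} {z : X}
    (hI : ConvergesTo I z) (hIK : I ⊆ K) (hK : IsClosed K) (hpos : 0 < subEnt T I) :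
    ∃ K' ⊆ K, K'.Nonempty ∧ IsCompact K' ∧ subEnt T K' = subEnt T I ∧
      {x | AccPt x (𝓟 K')}.Subsingleton := by
  have hinf : I.Infinite := fun hfin => hpos.not_ge (subEnt_finite_le hfin)
  have hz : z ∈ K := hK.closure_subset_iff.2 hIK
    (mem_closure_iff_clusterPt.2 (hI.accPt hinf).clusterPt)
  refine ⟨insert z I, insert_subset hz hIK, insert_nonempty z I,
    hI.insert.isCompact (mem_insert z I), le_antisymm ?_ (subEnt_mono (subset_insert z I)),
    hI.insert.subsingleton_accPt⟩
  exact (subEnt_insert_le z).trans_eq (max_eq_left hpos.le)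

namespace NatExt

variable [MetricSpace X] {T : X → X} {A U : Set (NatExt T)} {z z₀ : NatExt T} {ε : ℝ}
  {b c h : EReal}

theorem exists_coord_notMem_of_lt_locEnt (hh : 0 < h)
    (hfib : ∀ u v, AccPt u (𝓟 A) → AccPt v (𝓟 A) → coord T 0 u = coord T 0 v)
    (hloc : ∀ z, locEnt (natExtShift T) A z < h)
    (hz₀ : ∀ U ∈ 𝓝 z₀, ∀ b < h, ∃ z ∈ U, b < locEnt (natExtShift T) A z)
    (hU : U ∈ 𝓝 z₀) (hb : b < h) {F : Set X} (hF : F.Finite) :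
    ∃ z m, U ∈ 𝓝 z ∧ b < locEnt (natExtShift T) A z ∧ coord T m z ∉ F := by
  obtain ⟨z₁, hz₁, hb₁⟩ := hz₀ _ (interior_mem_nhds.2 hU) _ (max_lt hb hh)
  obtain ⟨z₂, hz₂, hb₂⟩ := hz₀ _ (interior_mem_nhds.2 hU) _ (hloc z₁)
  obtain ⟨hbz₁, hpos⟩ := max_lt_iff.1 hb₁
  have hcoord : coord T 0 z₁ = coord T 0 z₂ :=
    hfib _ _ (accPt_of_pos_locEnt hpos) (accPt_of_pos_locEnt (hpos.trans hb₂))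
  by_contra! hcon
  have heq : z₁ = z₂ := eq_of_coord_mem_finite hF hcoord
    (fun m => hcon z₁ m (mem_interior_iff_mem_nhds.1 hz₁) hbz₁)
    (fun m => hcon z₂ m (mem_interior_iff_mem_nhds.1 hz₂) (hbz₁.trans hb₂))
  exact hb₂.ne (heq ▸ rfl)

variable [CompactSpace X]

theorem exists_convergesTo_coord (hT : Continuous T) (hε : 0 < ε) (hε₁ : ε < 1) (hb : 0 ≤ b)
    (hA : ∀ I ⊆ A, ∀ z, ConvergesTo I z → subEnt (natExtShift T) I < h) (hU : U ∈ 𝓝 z)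
    (hUc : sepEnt (natExtShift T) ε (A ∩ U) < c) (hbz : b < locEnt (natExtShift T) A z) (m : ℕ) :
    ∃ B, ConvergesTo B (coord T m z) ∧ subEnt T B ∈ Ioo b h ∧ sepEnt T ε B < c := by
  obtain ⟨I, hIA, hI, hle⟩ := exists_convergesTo_locEnt_le_subEnt (natExtShift T) A z
  have hIU : b < subEnt (natExtShift T) (I ∩ U) := by
    have hfin : (I \ (I ∩ U)).Finite := by simpa using hI U hU
    obtain hlt | hlt := lt_max_iff.1 ((hbz.trans_le hle).trans_le (subEnt_le_of_finite_sdiff hfin))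
    · exact hlt
    · exact absurd hb hlt.not_ge
  refine ⟨coord T m '' (I ∩ U), (hI.mono inter_subset_left).image (continuous_coord m), ?_, ?_⟩
  · rw [subEnt_image_coord hT]
    exact ⟨hIU, (subEnt_mono inter_subset_left).trans_lt (hA I hIA z hI)⟩
  · calc sepEnt T ε (coord T m '' (I ∩ U)) ≤ sepEnt (natExtShift T) ε (I ∩ U) :=
          sepEnt_image_coord_le hε hε₁ m
      _ ≤ sepEnt (natExtShift T) ε (A ∩ U) := sepEnt_mono (inter_subset_inter_left U hIA)
      _ < c := hUc

theorem not_hul_of_forall_convergesTo_lt (hT : Continuous T) (hh : 0 < h)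
    (hAh : subEnt (natExtShift T) A = h)
    (hfib : ∀ u v, AccPt u (𝓟 A) → AccPt v (𝓟 A) → coord T 0 u = coord T 0 v)
    (hA : ∀ I ⊆ A, ∀ z, ConvergesTo I z → subEnt (natExtShift T) I < h) : ¬HUL T := by
  have := compactSpace hT
  have hloc (z : NatExt T) : locEnt (natExtShift T) A z < h := by
    obtain ⟨I, hIA, hI, hle⟩ := exists_convergesTo_locEnt_le_subEnt (natExtShift T) A z
    exact hle.trans_lt (hA I hIA z hI)
  obtain ⟨z₀, hz₀⟩ := exists_forall_nhds_exists_lt_locEnt (hAh ▸ hh)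
  rw [hAh] at hz₀
  obtain ⟨c, hzc, hch⟩ := exists_between (max_lt (hloc z₀) hh)
  obtain ⟨hzc, hc⟩ := max_lt_iff.1 hzc
  refine not_hul_of_infinite_setOf_convergesTo hT hc hch fun b hb ε hε hfin => ?_
  have hδ : 0 < min ε (1 / 2) := lt_min hε one_half_pos
  have hδ₁ : min ε (1 / 2) < 1 := (min_le_right _ _).trans_lt one_half_lt_one
  obtain ⟨U, hU, hUc⟩ := exists_nhds_sepEnt_lt ((locSepEnt_le_locEnt hδ).trans_lt hzc)
  obtain ⟨z, m, hUz, hbz, hzm⟩ :=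
    exists_coord_notMem_of_lt_locEnt hh hfib hloc hz₀ hU (max_lt hb hh) hfin
  obtain ⟨B, hB, hBh, hBc⟩ :=
    exists_convergesTo_coord hT hδ hδ₁ (le_max_right b 0) hA hUz hUc hbz m
  exact hzm ⟨B, hB, ⟨(le_max_left b 0).trans_lt hBh.1, hBh.2⟩,
    (sepEnt_anti (min_le_left _ _)).trans_lt hBc⟩

theorem hul_natExtShift (hT : Continuous T) (hHUL : HUL T) : HUL (natExtShift T) := by
  have := compactSpace hT
  intro K hne hK h hh₀ hh
  obtain rfl | hpos := hh₀.eq_or_lt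
  · obtain ⟨y, hy⟩ := hne
    exact ⟨{y}, singleton_subset_iff.2 hy, singleton_nonempty y, isCompact_singleton,
      subEnt_singleton y,
      ConvergesTo.subsingleton_accPt (z := y) fun _ _ => (finite_singleton y).sdiff⟩
  obtain ⟨L, hLK, -, -, hL, hacc⟩ := hHUL (coord T 0 '' K) (hne.image _)
    (hK.image (continuous_coord 0)) h hh₀ (hh.trans (subEnt_image_coord hT 0).ge)
  obtain ⟨A, hAK, hbij⟩ := SurjOn.exists_bijOn_subset (show SurjOn (coord T 0) K L from hLK)
  have hA : subEnt (natExtShift T) A = h := by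
    rw [← subEnt_image_coord hT 0, hbij.image_eq, hL]
  have hfib (u v : NatExt T) (hu : AccPt u (𝓟 A)) (hv : AccPt v (𝓟 A)) :
      coord T 0 u = coord T 0 v := by
    have hmap {w} (hw : AccPt w (𝓟 A)) : AccPt (coord T 0 w) (𝓟 L) :=
      hbij.image_eq ▸ accPt_image_of_injOn (continuous_coord 0) hbij.injOn hw
    exact hacc (hmap hu) (hmap hv)
  obtain ⟨I, hIA, z, hI, hhI⟩ : ∃ I ⊆ A, ∃ z, ConvergesTo I z ∧ h ≤ subEnt (natExtShift T) I := by
    by_contra! hlt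
    exact not_hul_of_forall_convergesTo_lt hT hpos hA hfib hlt hHUL
  have hIh : subEnt (natExtShift T) I = h := ((subEnt_mono hIA).trans_eq hA).antisymm hhI
  rw [← hIh] at hpos ⊢
  exact exists_isCompact_subEnt_eq_of_convergesTo hI (hIA.trans hAK) hK.isClosed hpos

end NatExt

/-- The natural extension `(X_T,S)` of a surjective GTDS `(X,T)` is
lowerable (resp. hereditarily lowerable, HUL, asymptotically `h`-expansive) iff so is
`(X,T)`. -/
theorem natural_extension_preserves {X : Type*} [MetricSpace X] [CompactSpace X]
    (T : X → X) (hT : Continuous T) (hsurj : Function.Surjective T) :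
    (Lowerable (natExtShift T) ↔ Lowerable T) ∧
    (HerLowerable (natExtShift T) ↔ HerLowerable T) ∧
    (HUL (natExtShift T) ↔ HUL T) ∧
    (AsympHExpansive (natExtShift T) ↔ AsympHExpansive T) := by
  have := NatExt.compactSpace hT
  have hcont : Continuous (NatExt.coord T 0) := NatExt.continuous_coord 0
  have hπ (I : Set (NatExt T)) := NatExt.subEnt_image_coord (I := I) hT 0
  have hπsurj := NatExt.coord_zero_surjective hsurj
  exact ⟨⟨.of_extension hcont hπ hπsurj, .of_factor hcont hπ hπsurj⟩,
    ⟨.of_extension hcont hπ hπsurj, .of_factor hcont hπ⟩,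
    ⟨.of_extension hcont hπ hπsurj, NatExt.hul_natExtShift hT⟩,
    NatExt.asympHExpansive_iff hT hsurj⟩
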